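/- Let d and p be positive natural numbers, let N ≥ 2 be a natural number, let y₁, …, y_N be points of ℝ^d, let 0 < ε < 1, and suppose p ≥ 24·ln N/(3ε² − 2ε³). Let ν be the product measure on matrices R ∈ (Fin p → Fin d → ℝ) with iid standard Gaussian N(0,1) entries, and for each R define f_R(y) := (1/√p)·(R·y). Then ν { R | ∀ i j, (1 − ε)·‖y_i − y_j‖² ≤ ‖f_R(y_i) − f_R(y_j)‖² ≤ (1 + ε)·‖y_i − y_j‖² } ≥ 1/N. -/

import Mathlib

open MeasureTheory ProbabilityTheory Matrix

/-!
For a fixed vector `w`, the coordinates of `R w` are independent `N(0, ‖w‖²)` variables, so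
`p ‖f_R w‖² / ‖w‖²` has a chi-square law with `p` degrees of freedom. Chernoff's bound, at the
parameter which is optimal for a relative deviation `δ > -1` (of either sign), gives the tail
estimate `exp (p (log (1 + δ) - δ) / 2)`, and `log (1 + δ) ≤ δ - δ² / 2 + δ³ / 3` turns this into
`exp (-p (ε² / 4 - ε³ / 6))` for both tails. The hypothesis on `p` makes this at most `N⁻²`, and
a union bound over the `N (N - 1) / 2` pairs of points and the two tails leaves a probability of
failure of at most `N (N - 1) / N² = 1 - 1 / N`.
-/

open scoped NNReal

lemma log_one_add_le_cubic {x : ℝ} (hx : -1 < x) :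
    Real.log (1 + x) ≤ x - x ^ 2 / 2 + x ^ 3 / 3 := by
  let f : ℝ → ℝ := fun z ↦ z - z ^ 2 / 2 + z ^ 3 / 3 - Real.log (1 + z)
  have hasDeriv {z : ℝ} (hz : -1 < z) : HasDerivAt f (z ^ 3 / (1 + z)) z := by
    have h1z : 1 + z ≠ 0 := by linarith
    have hlog : HasDerivAt (fun z : ℝ ↦ Real.log (1 + z)) (1 / (1 + z)) z :=
      ((hasDerivAt_id z).const_add 1).log h1z
    refine ((((hasDerivAt_id z).sub ((hasDerivAt_pow 2 z).div_const 2)).add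
      ((hasDerivAt_pow 3 z).div_const 3)).sub hlog).congr_deriv ?_
    field_simp
    push_cast
    ring
  have differentiableOn {s : Set ℝ} (hs : s ⊆ Set.Ioi (-1)) : DifferentiableOn ℝ f s :=
    fun z hz ↦ (hasDeriv (hs hz)).differentiableAt.differentiableWithinAt
  have hmin : IsMinOn f (Set.Ioi (-1)) 0 := by
    refine isMinOn_Ioi_of_deriv (hasDeriv (by norm_num)).continuousAt
      (differentiableOn Set.Ioo_subset_Ioi_self)
      (differentiableOn (Set.Ioi_subset_Ioi (by norm_num))) (fun z hz ↦ ?_) (fun z hz ↦ ?_)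
    · rw [(hasDeriv hz.1).deriv]
      exact div_nonpos_of_nonpos_of_nonneg (Odd.pow_nonpos (by decide) hz.2.le)
        (by linarith [hz.1])
    · have hz0 : 0 < z := hz
      rw [(hasDeriv (by linarith)).deriv]
      positivity
  have h0 : f 0 ≤ f x := hmin hx
  simp only [f] at h0
  norm_num at h0
  linarith

lemma measureReal_iUnion_iUnion_le_choose_two_mul {Ω ι : Type*} [MeasurableSpace Ω]
    {μ : Measure Ω} [Fintype ι] {B : ι → ι → Set Ω} {c : ℝ}
    (hsymm : ∀ i j, B i j = B j i) (hdiag : ∀ i, B i i = ∅)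
    (hB : Pairwise fun i j ↦ μ.real (B i j) ≤ c) :
    μ.real (⋃ i, ⋃ j, B i j) ≤ (Fintype.card ι).choose 2 * c := by
  classical
  let B' : Sym2 ι → Set Ω := Sym2.lift ⟨B, hsymm⟩
  have hcover : ⋃ i, ⋃ j, B i j = ⋃ z : {z : Sym2 ι // ¬ z.IsDiag}, B' z := by
    ext ω
    simp only [Set.mem_iUnion, Subtype.exists, Sym2.exists, Sym2.mk_isDiag_iff, B',
      Sym2.lift_mk, exists_prop]
    refine exists₂_congr fun i j ↦ ⟨fun hω ↦ ⟨?_, hω⟩, And.right⟩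
    rintro rfl
    simp [hdiag] at hω
  have hB' (z : {z : Sym2 ι // ¬ z.IsDiag}) : μ.real (B' z) ≤ c := by
    obtain ⟨⟨i, j⟩, hij⟩ := z
    exact hB hij
  calc μ.real (⋃ i, ⋃ j, B i j)
      ≤ ∑ z : {z : Sym2 ι // ¬ z.IsDiag}, μ.real (B' z) := by
        rw [hcover]
        exact measureReal_iUnion_fintype_le _
    _ ≤ (Fintype.card ι).choose 2 * c := by
        rw [← Sym2.card_subtype_not_diag, ← nsmul_eq_mul]
        exact Finset.sum_le_card_nsmul _ _ _ fun z _ ↦ hB' z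

section GaussianSquares

variable {v : ℝ≥0} {t : ℝ}

lemma gaussianPDFReal_mul_exp_mul_sq (hv : v ≠ 0) (t x : ℝ) :
    gaussianPDFReal 0 v x * Real.exp (t * x ^ 2) =
      (√(2 * Real.pi * v))⁻¹ * Real.exp (-((1 - 2 * v * t) / (2 * v)) * x ^ 2) := by
  rw [gaussianPDFReal, mul_assoc, ← Real.exp_add]
  congr 2
  have : (v : ℝ) ≠ 0 := by exact_mod_cast hv
  field_simp
  ring

lemma integrable_exp_mul_sq_gaussianReal (ht : 2 * v * t < 1) :
    Integrable (fun x ↦ Real.exp (t * x ^ 2)) (gaussianReal 0 v) := by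
  rcases eq_or_ne v 0 with rfl | hv
  · simp [integrable_dirac]
  rw [gaussianReal_of_var_ne_zero _ hv,
    integrable_withDensity_iff_integrable_smul' (measurable_gaussianPDF _ _)
      (ae_of_all _ fun _ ↦ gaussianPDF_lt_top)]
  simp_rw [toReal_gaussianPDF, smul_eq_mul, gaussianPDFReal_mul_exp_mul_sq hv]
  exact (integrable_exp_neg_mul_sq (div_pos (by linarith) (by positivity))).const_mul _

lemma mgf_sq_gaussianReal (ht : 2 * v * t < 1) :
    mgf (fun x ↦ x ^ 2) (gaussianReal 0 v) t = (√(1 - 2 * v * t))⁻¹ := by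
  rcases eq_or_ne v 0 with rfl | hv
  · simp [mgf]
  have h1 : 0 < 1 - 2 * v * t := by linarith
  rw [mgf, integral_gaussianReal_eq_integral_smul hv]
  simp_rw [smul_eq_mul, gaussianPDFReal_mul_exp_mul_sq hv]
  rw [integral_const_mul, integral_gaussian, ← Real.sqrt_inv, ← Real.sqrt_inv,
    ← Real.sqrt_mul (by positivity)]
  congr 1
  field_simp

variable (m : Type*) [Fintype m]

lemma integrable_exp_mul_sum_sq_pi_gaussianReal (ht : 2 * v * t < 1) :
    Integrable (fun x : m → ℝ ↦ Real.exp (t * ∑ i, x i ^ 2))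
      (Measure.pi fun _ ↦ gaussianReal 0 v) := by
  simp_rw [Finset.mul_sum, Real.exp_sum]
  exact Integrable.fintype_prod fun _ ↦ integrable_exp_mul_sq_gaussianReal ht

lemma mgf_sum_sq_pi_gaussianReal (ht : 2 * v * t < 1) :
    mgf (fun x : m → ℝ ↦ ∑ i, x i ^ 2) (Measure.pi fun _ ↦ gaussianReal 0 v) t =
      (√(1 - 2 * v * t))⁻¹ ^ Fintype.card m := by
  simp_rw [mgf, Finset.mul_sum, Real.exp_sum]
  rw [integral_fintype_prod_eq_pow (f := fun x : ℝ ↦ Real.exp (t * x ^ 2)),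
    ← mgf_sq_gaussianReal ht, mgf]

end GaussianSquares

section ChiSquareTails

variable {v : ℝ≥0} {m : Type*} [Fintype m]

lemma exp_mul_inv_sqrt_pow_le {δ : ℝ} (hδ : -1 < δ) (n : ℕ) :
    Real.exp (-(n * (δ / 2))) * (√(1 - δ / (1 + δ)))⁻¹ ^ n ≤
      Real.exp (-(n * (δ ^ 2 / 4 - δ ^ 3 / 6))) := by
  have h1δ : 0 < 1 + δ := by linarith
  have hfactor : (√(1 - δ / (1 + δ)))⁻¹ = Real.exp (Real.log (1 + δ) / 2) := by
    rw [← Real.log_sqrt h1δ.le, Real.exp_log (Real.sqrt_pos.2 h1δ), ← Real.sqrt_inv]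
    congr 1
    field_simp
    ring
  rw [hfactor, ← Real.exp_nat_mul, ← Real.exp_add, Real.exp_le_exp]
  linarith [mul_le_mul_of_nonneg_left (log_one_add_le_cubic hδ) (Nat.cast_nonneg (α := ℝ) n)]

-- The choice `2 v t = δ / (1 + δ)` minimizes the left-hand side over `t`.
lemma exp_mul_mgf_sum_sq_pi_gaussianReal_le {δ t : ℝ} (hδ : -1 < δ) (ht : 2 * v * t = δ / (1 + δ)) :
    Real.exp (-t * ((1 + δ) * (Fintype.card m * v))) *
        mgf (fun x : m → ℝ ↦ ∑ i, x i ^ 2) (Measure.pi fun _ ↦ gaussianReal 0 v) t ≤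
      Real.exp (-(Fintype.card m * (δ ^ 2 / 4 - δ ^ 3 / 6))) := by
  have h1δ : 0 < 1 + δ := by linarith
  have ht1 : 2 * v * t < 1 := by
    rw [ht, div_lt_one h1δ]
    linarith
  have hexponent : -t * ((1 + δ) * (Fintype.card m * v)) = -(Fintype.card m * (δ / 2)) := by
    linear_combination (-(Fintype.card m * (1 + δ) / 2 : ℝ)) * ht -
      Fintype.card m / 2 * mul_div_cancel₀ δ h1δ.ne'
  rw [mgf_sum_sq_pi_gaussianReal m ht1, hexponent, ht]
  exact exp_mul_inv_sqrt_pow_le hδ _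

lemma measureReal_pi_gaussianReal_sum_sq_ge_le (hv : v ≠ 0) {ε : ℝ} (hε : 0 ≤ ε) :
    (Measure.pi fun _ : m ↦ gaussianReal 0 v).real
        {x | (1 + ε) * (Fintype.card m * v) ≤ ∑ i, x i ^ 2} ≤
      Real.exp (-(Fintype.card m * (ε ^ 2 / 4 - ε ^ 3 / 6))) := by
  have ht : 2 * v * (ε / (1 + ε) / (2 * v)) = ε / (1 + ε) :=
    mul_div_cancel₀ _ (by positivity)
  have ht1 : 2 * v * (ε / (1 + ε) / (2 * v)) < 1 := by
    rw [ht, div_lt_one (by positivity)]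
    linarith
  exact (measure_ge_le_exp_mul_mgf _ (by positivity)
    (integrable_exp_mul_sum_sq_pi_gaussianReal m ht1)).trans
    (exp_mul_mgf_sum_sq_pi_gaussianReal_le (by linarith) ht)

lemma measureReal_pi_gaussianReal_sum_sq_le_le (hv : v ≠ 0) {ε : ℝ} (hε0 : 0 ≤ ε) (hε1 : ε < 1) :
    (Measure.pi fun _ : m ↦ gaussianReal 0 v).real
        {x | ∑ i, x i ^ 2 ≤ (1 - ε) * (Fintype.card m * v)} ≤
      Real.exp (-(Fintype.card m * (ε ^ 2 / 4 + ε ^ 3 / 6))) := by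
  have h1ε : 0 < 1 + -ε := by linarith
  have ht : 2 * v * (-ε / (1 + -ε) / (2 * v)) = -ε / (1 + -ε) :=
    mul_div_cancel₀ _ (by positivity)
  have ht0 : -ε / (1 + -ε) ≤ 0 := div_nonpos_of_nonpos_of_nonneg (by linarith) h1ε.le
  have hchernoff := (measure_le_le_exp_mul_mgf ((1 + -ε) * (Fintype.card m * v))
    (div_nonpos_of_nonpos_of_nonneg ht0 (by positivity))
    (integrable_exp_mul_sum_sq_pi_gaussianReal m (by linarith))).trans
    (exp_mul_mgf_sum_sq_pi_gaussianReal_le (by linarith) ht)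
  convert! hchernoff using 2
  ring

lemma measureReal_pi_gaussianReal_sum_sq_lt_le (hv : v ≠ 0) {ε : ℝ} (hε : 0 ≤ ε) :
    (Measure.pi fun _ : m ↦ gaussianReal 0 v).real
        {x | ∑ i, x i ^ 2 < (1 - ε) * (Fintype.card m * v)} ≤
      Real.exp (-(Fintype.card m * (ε ^ 2 / 4 - ε ^ 3 / 6))) := by
  rcases lt_or_ge ε 1 with hε1 | hε1
  · refine (measureReal_mono (Set.ofPred_subset_ofPred.2 fun x ↦ le_of_lt)).trans
      ((measureReal_pi_gaussianReal_sum_sq_le_le hv hε hε1).trans (Real.exp_le_exp.2 ?_))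
    gcongr
    linarith [pow_nonneg hε 3]
  · have hempty : {x : m → ℝ | ∑ i, x i ^ 2 < (1 - ε) * (Fintype.card m * v)} = ∅ := by
      refine Set.eq_empty_of_forall_notMem fun x hx ↦ not_lt_of_ge ?_ (Set.mem_ofPred.1 hx)
      exact (mul_nonpos_of_nonpos_of_nonneg (by linarith) (by positivity)).trans
        (Finset.sum_nonneg fun i _ ↦ sq_nonneg (x i))
    simp [hempty, Real.exp_nonneg]

lemma measureReal_pi_gaussianReal_abs_sum_sq_sub_gt_le (hv : v ≠ 0) {ε : ℝ} (hε : 0 ≤ ε) :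
    (Measure.pi fun _ : m ↦ gaussianReal 0 v).real
        {x | ε * (Fintype.card m * v) < |∑ i, x i ^ 2 - Fintype.card m * v|} ≤
      2 * Real.exp (-(Fintype.card m * (ε ^ 2 / 4 - ε ^ 3 / 6))) := by
  have hcover : {x : m → ℝ | ε * (Fintype.card m * v) < |∑ i, x i ^ 2 - Fintype.card m * v|} ⊆
      {x | (1 + ε) * (Fintype.card m * v) ≤ ∑ i, x i ^ 2} ∪
        {x | ∑ i, x i ^ 2 < (1 - ε) * (Fintype.card m * v)} := by
    intro x hx
    simp only [Set.mem_union, Set.mem_ofPred_eq, lt_abs] at hx ⊢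
    exact hx.imp (fun h ↦ by linarith) (fun h ↦ by linarith)
  rw [two_mul]
  exact (measureReal_mono hcover).trans <| (measureReal_union_le _ _).trans <|
    add_le_add (measureReal_pi_gaussianReal_sum_sq_ge_le hv hε)
      (measureReal_pi_gaussianReal_sum_sq_lt_le hv hε)

end ChiSquareTails

section GaussianMatrix

lemma measurable_of_mulVec {m n : Type*} [Fintype n] (u : n → ℝ) :
    Measurable fun R : m → n → ℝ ↦ Matrix.of R *ᵥ u := by
  unfold mulVec dotProduct
  simp only [of_apply]
  fun_prop

variable {m n : Type*} [Fintype m] [Fintype n]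

lemma stdGaussian_map_inner {E : Type*} [NormedAddCommGroup E] [InnerProductSpace ℝ E]
    [FiniteDimensional ℝ E] [MeasurableSpace E] [BorelSpace E] (u : E) :
    (stdGaussian E).map (fun x ↦ inner ℝ u x) = gaussianReal 0 (‖u‖₊ ^ 2) := by
  have hlaw := IsGaussian.map_eq_gaussianReal (μ := stdGaussian E) (innerSL ℝ u)
  rw [integral_strongDual_stdGaussian, variance_dual_stdGaussian, innerSL_apply_norm] at hlaw
  convert! hlaw using 2
  ext
  simp

lemma pi_gaussianReal_map_dotProduct (u : EuclideanSpace ℝ n) :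
    (Measure.pi fun _ : n ↦ gaussianReal 0 1).map (fun r ↦ r ⬝ᵥ u.ofLp) =
      gaussianReal 0 (‖u‖₊ ^ 2) := by
  rw [← stdGaussian_map_inner, ← map_pi_eq_stdGaussian,
    Measure.map_map (by fun_prop) (by fun_prop)]
  rfl

/-- The law of an `m × n` matrix with independent standard Gaussian entries, written `ν` for
`m = Fin p` and `n = Fin d`. -/
noncomputable def gaussianMatrix (m n : Type*) [Fintype m] [Fintype n] : Measure (m → n → ℝ) :=
  Measure.pi fun _ ↦ Measure.pi fun _ ↦ gaussianReal 0 1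

instance : IsProbabilityMeasure (gaussianMatrix m n) := by
  unfold gaussianMatrix
  infer_instance

lemma gaussianMatrix_map_mulVec (u : EuclideanSpace ℝ n) :
    (gaussianMatrix m n).map (fun R ↦ Matrix.of R *ᵥ u.ofLp) =
      Measure.pi fun _ ↦ gaussianReal 0 (‖u‖₊ ^ 2) := by
  have hm : Measurable fun r : n → ℝ ↦ r ⬝ᵥ u.ofLp := by unfold dotProduct; fun_prop
  have : IsProbabilityMeasure ((Measure.pi fun _ : n ↦ gaussianReal 0 1).map fun r ↦ r ⬝ᵥ u.ofLp) :=
    Measure.isProbabilityMeasure_map hm.aemeasurable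
  rw [← pi_gaussianReal_map_dotProduct]
  exact Measure.pi_map_pi fun _ ↦ hm.aemeasurable

/-- The map `f_R x = (1 / √p) R x`, where `p` is the number of rows of `R`; it is the zero map when
`p = 0`. -/
noncomputable def randomProjection (R : m → n → ℝ) (x : EuclideanSpace ℝ n) :
    EuclideanSpace ℝ m :=
  (WithLp.equiv 2 (m → ℝ)).symm
    ((1 / √(Fintype.card m)) • (Matrix.of R *ᵥ WithLp.equiv 2 (n → ℝ) x))

lemma randomProjection_sub (R : m → n → ℝ) (x x' : EuclideanSpace ℝ n) :
    randomProjection R (x - x') = randomProjection R x - randomProjection R x' := by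
  ext i
  simp [randomProjection, mulVec_sub, mul_sub]

lemma norm_randomProjection_sq (R : m → n → ℝ) (x : EuclideanSpace ℝ n) :
    ‖randomProjection R x‖ ^ 2 = (∑ i, (Matrix.of R *ᵥ x.ofLp) i ^ 2) / Fintype.card m := by
  simp [randomProjection, EuclideanSpace.real_norm_sq_eq, mul_pow, ← Finset.mul_sum,
    div_eq_inv_mul]

lemma measureReal_abs_norm_randomProjection_sq_sub_gt_le [Nonempty m] {ε : ℝ} (hε : 0 ≤ ε)
    (w : EuclideanSpace ℝ n) :
    (gaussianMatrix m n).real {R | ε * ‖w‖ ^ 2 < |‖randomProjection R w‖ ^ 2 - ‖w‖ ^ 2|} ≤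
      2 * Real.exp (-(Fintype.card m * (ε ^ 2 / 4 - ε ^ 3 / 6))) := by
  rcases eq_or_ne w 0 with rfl | hw
  · simp [norm_randomProjection_sq, Real.exp_nonneg]
  have hm : (0 : ℝ) < Fintype.card m := by exact_mod_cast Fintype.card_pos
  have hscale (R : m → n → ℝ) : ε * ‖w‖ ^ 2 < |‖randomProjection R w‖ ^ 2 - ‖w‖ ^ 2| ↔
      ε * (Fintype.card m * ‖w‖ ^ 2) <
        |∑ i, (Matrix.of R *ᵥ w.ofLp) i ^ 2 - Fintype.card m * ‖w‖ ^ 2| := by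
    rw [norm_randomProjection_sq, div_sub' hm.ne', abs_div, abs_of_pos hm, lt_div_iff₀ hm]
    ring_nf
  have htail := measureReal_pi_gaussianReal_abs_sum_sq_sub_gt_le (m := m) (v := ‖w‖₊ ^ 2)
    (pow_ne_zero 2 (nnnorm_ne_zero_iff.2 hw)) hε
  rw [← gaussianMatrix_map_mulVec (n := n),
    map_measureReal_apply (measurable_of_mulVec _)
      (measurableSet_lt (by fun_prop) (by fun_prop))] at htail
  simpa only [hscale, Set.preimage_ofPred_eq, NNReal.coe_pow, coe_nnnorm] using htail

end GaussianMatrix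

section JohnsonLindenstrauss

/-- `f` is a Johnson–Lindenstrauss embedding of the points `y` with distortion `ε`: it preserves
their squared pairwise distances up to a factor `1 ± ε`. -/
def IsJLEmbedding {ι E F : Type*} [SeminormedAddCommGroup E] [SeminormedAddCommGroup F] (ε : ℝ)
    (f : E → F) (y : ι → E) : Prop :=
  ∀ i j, (1 - ε) * ‖y i - y j‖ ^ 2 ≤ ‖f (y i) - f (y j)‖ ^ 2 ∧
    ‖f (y i) - f (y j)‖ ^ 2 ≤ (1 + ε) * ‖y i - y j‖ ^ 2

lemma isJLEmbedding_iff_abs_le {ι E F : Type*} [SeminormedAddCommGroup E]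
    [SeminormedAddCommGroup F] {ε : ℝ} {f : E → F} {y : ι → E} :
    IsJLEmbedding ε f y ↔
      ∀ i j, |‖f (y i) - f (y j)‖ ^ 2 - ‖y i - y j‖ ^ 2| ≤ ε * ‖y i - y j‖ ^ 2 := by
  refine forall₂_congr fun i j ↦ ?_
  rw [abs_sub_le_iff, and_comm]
  constructor <;> rintro ⟨h₁, h₂⟩ <;> constructor <;> linarith

variable {ι m n : Type*} [Fintype ι] [Fintype m] [Fintype n] {ε : ℝ}

lemma measureReal_not_isJLEmbedding_le [Nonempty m] (hε : 0 ≤ ε) (y : ι → EuclideanSpace ℝ n) :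
    (gaussianMatrix m n).real {R | ¬ IsJLEmbedding ε (randomProjection R) y} ≤
      Fintype.card ι * (Fintype.card ι - 1) *
        Real.exp (-(Fintype.card m * (ε ^ 2 / 4 - ε ^ 3 / 6))) := by
  let distorted (i j : ι) : Set (m → n → ℝ) :=
    {R | ε * ‖y i - y j‖ ^ 2 < |‖randomProjection R (y i - y j)‖ ^ 2 - ‖y i - y j‖ ^ 2|}
  have hcover : {R : m → n → ℝ | ¬ IsJLEmbedding ε (randomProjection R) y} =
      ⋃ i, ⋃ j, distorted i j := by
    ext R
    simp [isJLEmbedding_iff_abs_le, distorted, randomProjection_sub]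
  have hsymm (i j : ι) : distorted i j = distorted j i := by
    simp only [distorted, randomProjection_sub, norm_sub_rev]
  have hdiag (i : ι) : distorted i i = ∅ := by
    simp [distorted, randomProjection_sub]
  calc (gaussianMatrix m n).real {R | ¬ IsJLEmbedding ε (randomProjection R) y}
      ≤ (Fintype.card ι).choose 2 *
          (2 * Real.exp (-(Fintype.card m * (ε ^ 2 / 4 - ε ^ 3 / 6)))) := by
        rw [hcover]
        exact measureReal_iUnion_iUnion_le_choose_two_mul hsymm hdiag fun i j _ ↦
          measureReal_abs_norm_randomProjection_sq_sub_gt_le hε (y i - y j)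
    _ = Fintype.card ι * (Fintype.card ι - 1) *
          Real.exp (-(Fintype.card m * (ε ^ 2 / 4 - ε ^ 3 / 6))) := by
        rw [Nat.cast_choose_two]
        ring

lemma exp_neg_mul_le_inv_sq {x p : ℝ} (hx : 0 < x) (hε0 : 0 < ε) (hε : ε < 3 / 2)
    (hp : 24 * Real.log x / (3 * ε ^ 2 - 2 * ε ^ 3) ≤ p) :
    Real.exp (-(p * (ε ^ 2 / 4 - ε ^ 3 / 6))) ≤ (x ^ 2)⁻¹ := by
  have hden : 0 < 3 * ε ^ 2 - 2 * ε ^ 3 := by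
    have hfactor : 0 < ε ^ 2 * (3 - 2 * ε) := mul_pos (by positivity) (by linarith)
    linarith
  rw [div_le_iff₀ hden] at hp
  rw [← Real.exp_log (inv_pos.2 (pow_pos hx 2)), Real.exp_le_exp, Real.log_inv, Real.log_pow]
  push_cast
  linarith

theorem stmt14_general [Nonempty ι] [Nonempty m] (y : ι → EuclideanSpace ℝ n)
    (hε0 : 0 < ε) (hε : ε < 3 / 2)
    (hm : 24 * Real.log (Fintype.card ι) / (3 * ε ^ 2 - 2 * ε ^ 3) ≤ Fintype.card m) :
    ENNReal.ofReal (1 / Fintype.card ι) ≤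
      gaussianMatrix m n {R | IsJLEmbedding ε (randomProjection R) y} := by
  have hN : (1 : ℝ) ≤ Fintype.card ι := by exact_mod_cast Fintype.card_pos (α := ι)
  set good := {R : m → n → ℝ | IsJLEmbedding ε (randomProjection R) y}
  have hbad : (gaussianMatrix m n).real goodᶜ ≤ 1 - 1 / Fintype.card ι :=
    calc (gaussianMatrix m n).real goodᶜ
        ≤ Fintype.card ι * (Fintype.card ι - 1) *
            Real.exp (-(Fintype.card m * (ε ^ 2 / 4 - ε ^ 3 / 6))) :=
          measureReal_not_isJLEmbedding_le hε0.le y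
      _ ≤ Fintype.card ι * (Fintype.card ι - 1) * ((Fintype.card ι : ℝ) ^ 2)⁻¹ :=
          mul_le_mul_of_nonneg_left (exp_neg_mul_le_inv_sq (by linarith) hε0 hε hm)
            (mul_nonneg (by positivity) (by linarith))
      _ = 1 - 1 / Fintype.card ι := by field_simp
  have hcompl : 1 ≤ (gaussianMatrix m n).real good + (gaussianMatrix m n).real goodᶜ := by
    simpa using measureReal_union_le (μ := gaussianMatrix m n) good goodᶜ
  rw [← ofReal_measureReal]
  exact ENNReal.ofReal_le_ofReal (by linarith)

end JohnsonLindenstrauss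

/-- Random-projection Johnson–Lindenstrauss: if `N ≥ 2`, `0 < ε < 1`,
`p ≥ 24 ln N / (3ε² - 2ε³)`, and `ν` is the measure on `p×d` matrices with
iid standard Gaussian entries, then with probability at least `1/N` the map
`f_R(y) = (1/√p) (R y)` preserves all squared pairwise distances among the
`N` given points up to a factor `1 ± ε`. -/
theorem stmt14 (d p N : ℕ) (hd : 0 < d) (hp0 : 0 < p) (hN : 2 ≤ N)
    (y : Fin N → EuclideanSpace ℝ (Fin d))
    (ε : ℝ) (hε0 : 0 < ε) (hε1 : ε < 1)
    (hp : (p : ℝ) ≥ 24 * Real.log N / (3 * ε ^ 2 - 2 * ε ^ 3)) :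
    (Measure.pi fun _ : Fin p => Measure.pi fun _ : Fin d => gaussianReal 0 1)
        {R : Fin p → Fin d → ℝ | ∀ i j : Fin N,
          (1 - ε) * ‖y i - y j‖ ^ 2 ≤
            ‖(WithLp.equiv 2 (Fin p → ℝ)).symm
                ((1 / Real.sqrt p) •
                  ((Matrix.of R) *ᵥ (WithLp.equiv 2 (Fin d → ℝ)) (y i))) -
              (WithLp.equiv 2 (Fin p → ℝ)).symm
                ((1 / Real.sqrt p) •
                  ((Matrix.of R) *ᵥ (WithLp.equiv 2 (Fin d → ℝ)) (y j)))‖ ^ 2 ∧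
          ‖(WithLp.equiv 2 (Fin p → ℝ)).symm
                ((1 / Real.sqrt p) •
                  ((Matrix.of R) *ᵥ (WithLp.equiv 2 (Fin d → ℝ)) (y i))) -
              (WithLp.equiv 2 (Fin p → ℝ)).symm
                ((1 / Real.sqrt p) •
                  ((Matrix.of R) *ᵥ (WithLp.equiv 2 (Fin d → ℝ)) (y j)))‖ ^ 2 ≤
            (1 + ε) * ‖y i - y j‖ ^ 2}
      ≥ ENNReal.ofReal (1 / (N : ℝ)) := by
  have : NeZero p := ⟨hp0.ne'⟩
  have : NeZero N := ⟨by omega⟩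
  simpa only [IsJLEmbedding, randomProjection, gaussianMatrix, Fintype.card_fin] using
    stmt14_general (m := Fin p) y hε0 (by linarith) (by simpa only [Fintype.card_fin] using hp)
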